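/- Let (X, B, P_0) be a probability space and {P_θ : θ ∈ Θ} a family of probability measures, each absolutely continuous with respect to P_0. The family is boundedly complete if and only if the linear span of {dP_θ/dP_0 : θ ∈ Θ} is dense in L¹(P_0). -/

import Mathlib

open MeasureTheory

/-!
A submodule of `L¹` is dense iff no nonzero element of `(L¹)* = L^∞` annihilates it (Hahn–Banach),
and `∫ Y dP_θ = ∫ Y (dP_θ/dP_0) dP_0` says that the bounded `Y` with `∫ Y dP_θ = 0` for all `θ` are
exactly the annihilators of the likelihood ratios.

For the duality, a functional on the `L¹` space of a finite measure restricts to `L²`, where it is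
given by some `y`; testing on indicators bounds `y` by the norm of the functional. A σ-finite `μ`
has a finite reweighting `ν = w μ` with `w > 0`, and `g ↦ w g` identifies `L¹(ν)` with `L¹(μ)`.
-/

open scoped ENNReal NNReal

theorem dense_span_iff_forall_strongDual_eq_zero {𝕜 E : Type*} [RCLike 𝕜] [NormedAddCommGroup E]
    [NormedSpace 𝕜 E] {s : Set E} :
    Dense (Submodule.span 𝕜 s : Set E) ↔
      ∀ φ : StrongDual 𝕜 E, (∀ x ∈ s, φ x = 0) → φ = 0 := by
  refine ⟨fun hs φ hφ ↦ ContinuousLinearMap.ext_on hs hφ, fun h ↦ ?_⟩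
  rw [Submodule.dense_iff_topologicalClosure_eq_top, Submodule.eq_top_iff']
  intro x
  set S := (Submodule.span 𝕜 s).topologicalClosure
  have : IsClosed (S : Set E) := Submodule.isClosed_topologicalClosure _
  rw [← Submodule.Quotient.mk_eq_zero]
  refine SeparatingDual.eq_zero_of_forall_dual_eq_zero (R := 𝕜) fun ψ ↦ ?_
  have hψ : ψ ∘L S.mkQL = 0 := h _ fun y hy ↦ by
    have hyS : y ∈ S := Submodule.le_topologicalClosure _ (Submodule.subset_span hy)
    simp [(Submodule.Quotient.mk_eq_zero S).2 hyS]
  simpa using DFunLike.congr_fun hψ x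

section Duality

variable {X : Type*} [MeasurableSpace X] {μ : Measure X}

theorem continuousLinearMap_lp_ext {𝕜 E F : Type*} [NormedField 𝕜] [NormedAddCommGroup E]
    [NormedSpace 𝕜 E] [NormedAddCommGroup F] [NormedSpace 𝕜 F] {p : ℝ≥0∞} [Fact (1 ≤ p)]
    (hp : p ≠ ∞) {φ ψ : Lp E p μ →L[𝕜] F}
    (h : ∀ (s : Set X) (hs : MeasurableSet s) (hμs : μ s ≠ ∞) (c : E),
      φ (indicatorConstLp p hs hμs c) = ψ (indicatorConstLp p hs hμs c)) :
    φ = ψ := by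
  ext f
  induction f using Lp.induction hp with
  | indicatorConst c hs hμs => simpa using h _ hs hμs.ne c
  | add hf hg _ hφf hφg => rw [map_add, map_add, hφf, hφg]
  | isClosed => exact isClosed_eq φ.continuous ψ.continuous

theorem ae_abs_le_of_forall_abs_setIntegral_le [SigmaFinite μ] {f : X → ℝ} {C : ℝ}
    (hf : ∀ s, MeasurableSet s → μ s < ∞ → IntegrableOn f s μ)
    (hC : ∀ s, MeasurableSet s → μ s < ∞ → |∫ x in s, f x ∂μ| ≤ C * μ.real s) :
    ∀ᵐ x ∂μ, |f x| ≤ C := by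
  have hconst : ∀ s, μ s < ∞ → IntegrableOn (fun _ ↦ C) s μ := fun s hμs ↦
    integrableOn_const hμs.ne
  have hupper : 0 ≤ᵐ[μ] fun x ↦ C - f x := by
    refine ae_nonneg_of_forall_setIntegral_nonneg_of_sigmaFinite
      (fun s hs hμs ↦ (hconst s hμs).sub (hf s hs hμs)) fun s hs hμs ↦ ?_
    rw [integral_sub (hconst s hμs) (hf s hs hμs), setIntegral_const, smul_eq_mul, mul_comm]
    exact sub_nonneg.2 (abs_le.1 (hC s hs hμs)).2
  have hlower : 0 ≤ᵐ[μ] fun x ↦ C + f x := by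
    refine ae_nonneg_of_forall_setIntegral_nonneg_of_sigmaFinite
      (fun s hs hμs ↦ (hconst s hμs).add (hf s hs hμs)) fun s hs hμs ↦ ?_
    rw [integral_add (hconst s hμs) (hf s hs hμs), setIntegral_const, smul_eq_mul, mul_comm]
    exact neg_le_iff_add_nonneg'.1 (abs_le.1 (hC s hs hμs)).1
  filter_upwards [hupper, hlower] with x hxu hxl
  exact abs_le.2 ⟨neg_le_iff_add_nonneg'.2 hxl, sub_nonneg.1 hxu⟩

theorem surjective_withDensitySMulLI {E : Type*} [NormedAddCommGroup E] [NormedSpace ℝ E]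
    {w : X → ℝ≥0} (hw : Measurable w) (hpos : ∀ x, 0 < w x) :
    Function.Surjective (withDensitySMulLI μ (E := E) hw) := by
  intro f
  have hcancel : (fun x ↦ w x • (w x)⁻¹ • f x) = f := by
    ext x
    exact smul_inv_smul₀ (hpos x).ne' _
  have hg : Integrable (fun x ↦ (w x)⁻¹ • f x) (μ.withDensity fun x ↦ w x) := by
    rw [integrable_withDensity_iff_integrable_smul hw, hcancel]
    exact L1.integrable_coeFn f
  refine ⟨hg.toL1 _, ?_⟩
  ext1
  rw [withDensitySMulLI_apply]
  refine (MemLp.coeFn_toLp _).trans ?_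
  have hae := (ae_withDensity_iff hw.coe_nnreal_ennreal).1 hg.coeFn_toL1
  filter_upwards [hae] with x hx
  rw [hx (ENNReal.coe_ne_zero.2 (hpos x).ne'), smul_inv_smul₀ (hpos x).ne']

variable (μ) in
/-- The canonical map `L^∞ → (L¹)*`, sending `Y` to the functional `f ↦ ∫ Y f dμ`. -/
noncomputable def linftyToDualL1 : Lp ℝ ∞ μ →L[ℝ] StrongDual ℝ (Lp ℝ 1 μ) :=
  (ContinuousLinearMap.mul ℝ ℝ).lpPairing μ ∞ 1

variable (μ) in
/-- The inclusion `L² → L¹` over a finite measure, encoded as the Hölder product with the constant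
`1 ∈ L²`. -/
noncomputable def l2ToL1 [IsFiniteMeasure μ] : Lp ℝ 2 μ →L[ℝ] Lp ℝ 1 μ :=
  (ContinuousLinearMap.mul ℝ ℝ).holderL μ 2 2 1 (Lp.const 2 μ (1 : ℝ))

theorem linftyToDualL1_apply (Y : Lp ℝ ∞ μ) (f : Lp ℝ 1 μ) :
    linftyToDualL1 μ Y f = ∫ x, Y x * f x ∂μ :=
  (ContinuousLinearMap.mul ℝ ℝ).lpPairing_eq_integral Y f

theorem linftyToDualL1_toLp_toL1 {Y f : X → ℝ} (hY : MemLp Y ∞ μ) (hf : Integrable f μ) :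
    linftyToDualL1 μ (hY.toLp Y) (hf.toL1 f) = ∫ x, Y x * f x ∂μ := by
  rw [linftyToDualL1_apply]
  exact integral_congr_ae (hY.coeFn_toLp.mul hf.coeFn_toL1)

theorem coeFn_l2ToL1 [IsFiniteMeasure μ] (f : Lp ℝ 2 μ) : l2ToL1 μ f =ᵐ[μ] f := by
  filter_upwards [(ContinuousLinearMap.mul ℝ ℝ).coeFn_holder (r := 1) (Lp.const 2 μ (1 : ℝ)) f,
    Lp.coeFn_const (p := 2) (μ := μ) (1 : ℝ)] with x hx hone
  rw [Function.const_apply] at hone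
  rw [ContinuousLinearMap.mul_apply', hone, one_mul] at hx
  exact hx

theorem l2ToL1_indicatorConstLp [IsFiniteMeasure μ] {s : Set X} (hs : MeasurableSet s)
    (hμs : μ s ≠ ∞) (c : ℝ) :
    l2ToL1 μ (indicatorConstLp 2 hs hμs c) = indicatorConstLp 1 hs hμs c :=
  Lp.ext <| (coeFn_l2ToL1 _).trans (indicatorConstLp_coeFn.trans indicatorConstLp_coeFn.symm)

theorem linftyToDualL1_indicatorConstLp (Y : Lp ℝ ∞ μ) {s : Set X} (hs : MeasurableSet s)
    (hμs : μ s ≠ ∞) (c : ℝ) :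
    linftyToDualL1 μ Y (indicatorConstLp 1 hs hμs c) = ∫ x in s, Y x * c ∂μ := by
  rw [linftyToDualL1_apply, ← integral_indicator hs]
  refine integral_congr_ae ?_
  filter_upwards [indicatorConstLp_coeFn (p := 1) (hs := hs) (hμs := hμs) (c := c)] with x hx
  rw [hx, Set.indicator_mul_right]

theorem injective_linftyToDualL1 [SigmaFinite μ] : Function.Injective (linftyToDualL1 μ) := by
  refine (injective_iff_map_eq_zero _).2 fun Y hY ↦ ?_
  refine (Lp.eq_zero_iff_ae_eq_zero).2 <| ae_eq_zero_of_forall_setIntegral_eq_of_sigmaFinite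
    (fun s _ hμs ↦ integrableOn_Lp_of_measure_ne_top Y le_top hμs.ne) fun s hs hμs ↦ ?_
  simpa [hY] using (linftyToDualL1_indicatorConstLp Y hs hμs.ne 1).symm

theorem exists_l2_forall_apply_indicatorConstLp_eq [IsFiniteMeasure μ]
    (φ : StrongDual ℝ (Lp ℝ 1 μ)) :
    ∃ y : Lp ℝ 2 μ, ∀ (s : Set X) (hs : MeasurableSet s) (hμs : μ s ≠ ∞) (c : ℝ),
      φ (indicatorConstLp 1 hs hμs c) = ∫ x in s, y x * c ∂μ := by
  refine ⟨(InnerProductSpace.toDual ℝ (Lp ℝ 2 μ)).symm (φ ∘L l2ToL1 μ), fun s hs hμs c ↦ ?_⟩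
  rw [← l2ToL1_indicatorConstLp hs hμs, ← ContinuousLinearMap.comp_apply,
    ← InnerProductSpace.toDual_symm_apply, real_inner_comm,
    L2.inner_indicatorConstLp_eq_setIntegral_inner]
  simp only [RCLike.inner_apply, conj_trivial]

theorem surjective_linftyToDualL1_of_isFiniteMeasure [IsFiniteMeasure μ] :
    Function.Surjective (linftyToDualL1 μ) := by
  intro φ
  obtain ⟨y, hy⟩ := exists_l2_forall_apply_indicatorConstLp_eq φ
  have hbound : ∀ᵐ x ∂μ, |y x| ≤ ‖φ‖ := by
    refine ae_abs_le_of_forall_abs_setIntegral_le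
      (fun s _ hμs ↦ integrableOn_Lp_of_measure_ne_top y one_le_two hμs.ne) fun s hs hμs ↦ ?_
    calc |∫ x in s, y x ∂μ| = ‖φ (indicatorConstLp 1 hs hμs.ne 1)‖ := by simp [hy]
      _ ≤ ‖φ‖ * ‖indicatorConstLp 1 hs hμs.ne (1 : ℝ)‖ := φ.le_opNorm _
      _ = ‖φ‖ * μ.real s := by simp [norm_indicatorConstLp one_ne_zero ENNReal.one_ne_top]
  have hmem : MemLp y ∞ μ := memLp_top_of_bound (Lp.aestronglyMeasurable y) ‖φ‖ hbound
  refine ⟨hmem.toLp y, continuousLinearMap_lp_ext ENNReal.one_ne_top fun s hs hμs c ↦ ?_⟩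
  rw [hy, linftyToDualL1_indicatorConstLp]
  refine integral_congr_ae (ae_restrict_of_ae ?_)
  filter_upwards [hmem.coeFn_toLp] with x hx
  rw [hx]

theorem surjective_linftyToDualL1 [SigmaFinite μ] : Function.Surjective (linftyToDualL1 μ) := by
  intro φ
  obtain ⟨w, hpos, hw, hint⟩ := exists_pos_lintegral_lt_of_sigmaFinite μ one_ne_zero
  let ν := μ.withDensity fun x ↦ w x
  have : IsFiniteMeasure ν := isFiniteMeasure_withDensity hint.ne_top
  have hμν : μ ≪ ν := withDensity_absolutelyContinuous' hw.coe_nnreal_ennreal.aemeasurable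
    (.of_forall fun x ↦ ENNReal.coe_ne_zero.2 (hpos x).ne')
  obtain ⟨Y, hY⟩ := surjective_linftyToDualL1_of_isFiniteMeasure
    (φ ∘L (withDensitySMulLI μ hw).toContinuousLinearMap)
  have hmem : MemLp Y ∞ μ := ⟨(Lp.aestronglyMeasurable Y).mono_ac hμν,
    (eLpNormEssSup_mono_measure Y hμν).trans_lt (Lp.eLpNorm_lt_top Y)⟩
  refine ⟨hmem.toLp Y, ContinuousLinearMap.ext fun f ↦ ?_⟩
  obtain ⟨g, rfl⟩ := surjective_withDensitySMulLI hw hpos f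
  refine Eq.trans ?_ (DFunLike.congr_fun hY g)
  rw [linftyToDualL1_apply, linftyToDualL1_apply, integral_withDensity_eq_integral_smul hw]
  refine integral_congr_ae ?_
  filter_upwards [hmem.coeFn_toLp, (memL1_smul_of_L1_withDensity hw g).coeFn_toLp] with x hYx hgx
  rw [hYx, withDensitySMulLI_apply, hgx, mul_smul_comm]

theorem exists_ae_norm_le_of_memLp_top {E : Type*} [NormedAddCommGroup E] {f : X → E}
    (hf : MemLp f ∞ μ) : ∃ C : ℝ, ∀ᵐ x ∂μ, ‖f x‖ ≤ C := by
  obtain ⟨C, hC⟩ := eLpNormEssSup_lt_top_iff_isBoundedUnder.1 hf.2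
  exact ⟨C, hC⟩

theorem dense_span_range_toL1_iff_forall_bounded [SigmaFinite μ] {ι : Type*}
    {d : ι → X → ℝ} (hd : ∀ i, Integrable (d i) μ) :
    Dense (Submodule.span ℝ (Set.range fun i ↦ (hd i).toL1 (d i)) : Set (Lp ℝ 1 μ)) ↔
      ∀ Y : X → ℝ, Measurable Y → (∃ M : ℝ, ∀ᵐ x ∂μ, |Y x| ≤ M) →
        (∀ i, ∫ x, Y x * d i x ∂μ = 0) → Y =ᵐ[μ] 0 := by
  rw [dense_span_iff_forall_strongDual_eq_zero]
  simp only [Set.forall_mem_range]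
  constructor
  · rintro h Y hYm ⟨M, hM⟩ hYd
    have hY : MemLp Y ∞ μ := memLp_top_of_bound hYm.aestronglyMeasurable M hM
    have hzero : linftyToDualL1 μ (hY.toLp Y) = 0 := h _ fun i ↦ by
      rw [linftyToDualL1_toLp_toL1, hYd]
    exact hY.coeFn_toLp.symm.trans <| Lp.eq_zero_iff_ae_eq_zero.1 <|
      (map_eq_zero_iff _ injective_linftyToDualL1).1 hzero
  · intro h φ hφ
    obtain ⟨Y, rfl⟩ := surjective_linftyToDualL1 φ
    have hY : Y =ᵐ[μ] 0 := by
      refine h Y (Lp.stronglyMeasurable Y).measurable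
        (exists_ae_norm_le_of_memLp_top (Lp.memLp Y)) fun i ↦ ?_
      rw [← linftyToDualL1_toLp_toL1 (Lp.memLp Y) (hd i), Lp.toLp_coeFn, hφ]
    rw [Lp.eq_zero_iff_ae_eq_zero.2 hY, map_zero]

end Duality

section Span

variable {X E ι : Type*} [MeasurableSpace X] {μ : Measure X} [NormedAddCommGroup E]
  {𝕜 : Type*} [NormedField 𝕜] [NormedSpace 𝕜 E] {d : ι → X → E}

theorem coeFn_finsuppSum_smul_toL1 (hd : ∀ i, Integrable (d i) μ) (c : ι →₀ 𝕜) :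
    (c.sum fun i a ↦ a • (hd i).toL1 (d i) : Lp E 1 μ) =ᵐ[μ] c.sum fun i a ↦ a • d i := by
  classical
  induction c using Finsupp.induction_linear with
  | zero => simpa using Lp.coeFn_zero E 1 μ
  | add c₁ c₂ h₁ h₂ =>
    rw [Finsupp.sum_add_index' (by simp) (by simp [add_smul]),
      Finsupp.sum_add_index' (by simp) (by simp [add_smul])]
    exact (Lp.coeFn_add _ _).trans (h₁.add h₂)
  | single i a =>
    rw [Finsupp.sum_single_index (by simp), Finsupp.sum_single_index (by simp)]
    exact (Lp.coeFn_smul _ _).trans ((hd i).coeFn_toL1.const_smul a)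

theorem dist_toL1_finsuppSum_smul_toL1 (hd : ∀ i, Integrable (d i) μ) {f : X → E}
    (hf : Integrable f μ) (c : ι →₀ 𝕜) :
    dist (hf.toL1 f) (c.sum fun i a ↦ a • (hd i).toL1 (d i)) =
      ∫ x, ‖f x - (c.sum fun i a ↦ a • d i) x‖ ∂μ := by
  rw [L1.dist_eq_integral_dist]
  refine integral_congr_ae ?_
  filter_upwards [hf.coeFn_toL1, coeFn_finsuppSum_smul_toL1 hd c] with x hfx hcx
  rw [hfx, hcx, dist_eq_norm]

theorem dense_span_range_toL1_iff_exists_integral_norm_sub_lt (hd : ∀ i, Integrable (d i) μ) :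
    Dense (Submodule.span 𝕜 (Set.range fun i ↦ (hd i).toL1 (d i)) : Set (Lp E 1 μ)) ↔
      ∀ f : X → E, Integrable f μ → ∀ ε > 0,
        ∃ g ∈ Submodule.span 𝕜 (Set.range d), ∫ x, ‖f x - g x‖ ∂μ < ε := by
  constructor
  · intro hdense f hf ε hε
    obtain ⟨s, hs, hlt⟩ := hdense.exists_dist_lt (hf.toL1 f) hε
    obtain ⟨c, rfl⟩ := Finsupp.mem_span_range_iff_exists_finsupp.1 hs
    rw [dist_toL1_finsuppSum_smul_toL1] at hlt
    exact ⟨_, Finsupp.mem_span_range_iff_exists_finsupp.2 ⟨c, rfl⟩, hlt⟩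
  · intro happrox
    refine Metric.dense_iff.2 fun f ε hε ↦ ?_
    obtain ⟨g, hg, hlt⟩ := happrox f (L1.integrable_coeFn f) ε hε
    obtain ⟨c, rfl⟩ := Finsupp.mem_span_range_iff_exists_finsupp.1 hg
    refine ⟨_, ?_, Finsupp.mem_span_range_iff_exists_finsupp.2 ⟨c, rfl⟩⟩
    rwa [Metric.mem_ball', ← Integrable.toL1_coeFn f (L1.integrable_coeFn f),
      dist_toL1_finsuppSum_smul_toL1]

end Span

theorem farrell_boundedly_complete_iff_dense_general
    {X : Type*} [MeasurableSpace X] {Θ : Type*}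
    (P0 : Measure X) [SigmaFinite P0]
    (P : Θ → Measure X) [∀ θ, IsFiniteMeasure (P θ)]
    (hac : ∀ θ, P θ ≪ P0) :
    (∀ Y : X → ℝ, Measurable Y → (∃ M : ℝ, ∀ᵐ x ∂P0, |Y x| ≤ M) →
        (∀ θ : Θ, ∫ x, Y x ∂(P θ) = 0) → Y =ᵐ[P0] 0)
      ↔ (∀ f : X → ℝ, Integrable f P0 → ∀ ε > 0,
          ∃ g ∈ Submodule.span ℝ
            {h : X → ℝ | ∃ θ : Θ, h = fun x => ((P θ).rnDeriv P0 x).toReal},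
            ∫ x, |f x - g x| ∂P0 < ε) := by
  let d (θ : Θ) (x : X) : ℝ := ((P θ).rnDeriv P0 x).toReal
  have hd (θ : Θ) : Integrable (d θ) P0 := Measure.integrable_toReal_rnDeriv
  have hrange : {h : X → ℝ | ∃ θ, h = d θ} = Set.range d := by
    ext h
    simp only [Set.mem_ofPred_eq, Set.mem_range, eq_comm]
  have hintegral (θ : Θ) (Y : X → ℝ) : ∫ x, Y x ∂(P θ) = ∫ x, Y x * d θ x ∂P0 := by
    simp only [← integral_toReal_rnDeriv_mul (hac θ), mul_comm, d]
  rw [hrange]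
  simp only [hintegral, ← Real.norm_eq_abs]
  exact (dense_span_range_toL1_iff_forall_bounded hd).symm.trans
    (dense_span_range_toL1_iff_exists_integral_norm_sub_lt hd)

/-- Farrell's characterization: a dominated family `{P_θ}` is boundedly complete
iff the linear span of the likelihood ratios `dP_θ/dP_0` is dense in `L¹(P_0)`. -/
theorem farrell_boundedly_complete_iff_dense
    {X : Type*} [MeasurableSpace X] {Θ : Type*}
    (P0 : Measure X) [IsProbabilityMeasure P0]
    (P : Θ → Measure X) [∀ θ, IsProbabilityMeasure (P θ)]
    (hac : ∀ θ, P θ ≪ P0) :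
    (∀ Y : X → ℝ, Measurable Y → (∃ M : ℝ, ∀ᵐ x ∂P0, |Y x| ≤ M) →
        (∀ θ : Θ, ∫ x, Y x ∂(P θ) = 0) → Y =ᵐ[P0] 0)
      ↔ (∀ f : X → ℝ, Integrable f P0 → ∀ ε > 0,
          ∃ g ∈ Submodule.span ℝ
            {h : X → ℝ | ∃ θ : Θ, h = fun x => ((P θ).rnDeriv P0 x).toReal},
            ∫ x, |f x - g x| ∂P0 < ε) :=
  farrell_boundedly_complete_iff_dense_general P0 P hac
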